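/- For every integer n ≥ 36, both N2(4,8,n) < N2(0,8,n) and N2(3,8,n) < N2(1,8,n) hold. -/

import Mathlib

open scoped Classical

/-- The M2-rank of a partition: ⌈ℓ/2⌉ − s, where ℓ is the largest part
(0 for the empty partition) and s is the number of parts. -/
def m2Rank {n : ℕ} (P : n.Partition) : ℤ :=
  (((P.parts.sup + 1) / 2 : ℕ) : ℤ) - (Multiset.card P.parts : ℤ)

/-- A partition has no repeated odd parts. -/
def NoRepeatedOddParts {n : ℕ} (P : n.Partition) : Prop :=
  ∀ j : ℕ, Odd j → P.parts.count j ≤ 1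

/-- `N2 r m n` is the number of partitions of `n` without repeated odd parts whose
M2-rank is congruent to `r` modulo `m`. -/
noncomputable def N2 (r : ℤ) (m n : ℕ) : ℕ :=
  Nat.card {P : n.Partition // NoRepeatedOddParts P ∧ m2Rank P ≡ r [ZMOD (m : ℤ)]}

/-!
Let `A_m(q)` be the generating function of the partitions without repeated odd parts and with
M2-rank at most `m`. Removing the largest part and prepending a column to the 2-modular diagram of
the remaining parts gives a recurrence between the partitions of rank at most `m` and those of rank
greater than `m - 2`. It yields the symmetry of the rank, Gauss's identity that the generating
function of all these partitions is the inverse of `∑ (-1)^i q^(i(2i-1))`, and, after multiplication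
by the theta series `∑ (-1)^k x^(2k) q^(2k(k-1))`, a single geometric progression
`± q^e / (1 - q^(2i+1))` for each rank bound.

For an even function `χ` of the rank with `χ (r + 4) = -χ r`, summation by parts turns this into
`(∑ (-1)^i q^(4i(2i-1))) R(q) = ∑ w_i q^(e_i) / (1 - q^(2i+1))`, where `R` is the generating
function of the sums of `χ` over the ranks. By Gauss's identity in `q^4`, the inverse of the theta
series on the left is the generating function `P(q^4)` of a nondecreasing sequence starting with
`1`. Hence, with `M(q) = ∑ w_i q^(e_i) / ((1 - q^4) (1 - q^(2i+1)))`, the coefficients of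
`R = (1 - q^4) P(q^4) M` dominate those of `M` as soon as the latter are nonnegative.

The difference `N2 a 8 - N2 (4 - a) 8` is half such a rank sum. Its weights `w_i` have period `8`,
and in each period every negative weight can be paired with an earlier equal positive one; since the
coefficients of `q^(e_i) / ((1 - q^4) (1 - q^(2i+1)))` decrease in `i` up to an error of `1`, the
first few terms decide the sign of the coefficients of `M` for `n ≥ 83`. Below `83` only eleven
terms are nonzero, and the coefficients are computed.
-/

namespace M2Rank

/-! ### 2-modular diagrams -/

/-- The multisets of parts of partitions without repeated odd parts. -/
def OddDistinct (s : Multiset ℕ) : Prop :=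
  0 ∉ s ∧ ∀ j, Odd j → s.count j ≤ 1

/-- The M2-rank of a multiset of parts; see `m2Rank`. -/
def rank (s : Multiset ℕ) : ℤ :=
  ((s.sup + 1) / 2 : ℕ) - (Multiset.card s : ℤ)

theorem rank_zero : rank 0 = 0 := by simp [rank]

theorem rank_le_iff {s : Multiset ℕ} {m : ℤ} :
    rank s ≤ m ↔ 0 ≤ m + Multiset.card s ∧ ∀ x ∈ s, (x : ℤ) ≤ 2 * (m + Multiset.card s) := by
  have hsup : (∀ x ∈ s, x ≤ (2 * (m + Multiset.card s)).toNat) ↔ _ := Multiset.sup_le.symm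
  have hcast (x : ℕ) (h : 0 ≤ m + Multiset.card s) :
      x ≤ (2 * (m + Multiset.card s)).toNat ↔ (x : ℤ) ≤ 2 * (m + Multiset.card s) := by omega
  rw [rank]
  constructor
  · intro h
    have h0 : 0 ≤ m + Multiset.card s := by omega
    exact ⟨h0, fun x hx => (hcast x h0).1 (hsup.2 (by omega) x hx)⟩
  · rintro ⟨h0, h⟩
    have := hsup.1 fun x hx => (hcast x h0).2 (h x hx)
    omega

theorem neg_sum_le_rank {s : Multiset ℕ} (hs : 0 ∉ s) : -(s.sum : ℤ) ≤ rank s := by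
  have hcard : Multiset.card s • 1 ≤ s.sum :=
    Multiset.card_nsmul_le_sum fun x hx => Nat.pos_of_ne_zero (ne_of_mem_of_not_mem hx hs)
  rw [smul_eq_mul, mul_one] at hcard
  rw [rank]
  omega

theorem rank_le_sum (s : Multiset ℕ) : rank s ≤ s.sum := by
  have hsup : s.sup ≤ s.sum := Multiset.sup_le.2 fun x hx => Multiset.le_sum_of_mem hx
  rw [rank]
  omega

theorem sup_mem {s : Multiset ℕ} (hs : s ≠ 0) : s.sup ∈ s := by
  obtain ⟨x, hx, hmax⟩ := s.toFinset.exists_max_image id (by simpa using hs)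
  simp only [Multiset.mem_toFinset, id] at hx hmax
  rwa [le_antisymm (Multiset.sup_le.2 hmax) (Multiset.le_sup hx)]

theorem sup_add_sum_erase_sup (s : Multiset ℕ) : s.sup + (s.erase s.sup).sum = s.sum := by
  rcases eq_or_ne s 0 with rfl | hs
  · simp
  · exact Multiset.sum_erase (sup_mem hs)

theorem eq_zero_of_sup_eq_zero {s : Multiset ℕ} (hs : 0 ∉ s) (h : s.sup = 0) : s = 0 := by
  by_contra hne
  exact hs (h ▸ sup_mem hne)

theorem OddDistinct.mono {s t : Multiset ℕ} (ht : OddDistinct t) (h : s ≤ t) : OddDistinct s :=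
  ⟨fun h0 => ht.1 (Multiset.mem_of_le h h0),
    fun j hj => (Multiset.count_le_of_le j h).trans (ht.2 j hj)⟩

theorem OddDistinct.cons {s : Multiset ℕ} {l : ℕ} (hs : OddDistinct s) (hl : l ≠ 0)
    (hodd : Odd l → l ∉ s) : OddDistinct (l ::ₘ s) := by
  refine ⟨by simpa [Multiset.mem_cons, hl.symm] using hs.1, fun j hj => ?_⟩
  rcases eq_or_ne j l with rfl | hjl
  · rw [Multiset.count_cons_self, Multiset.count_eq_zero.2 (hodd hj)]
  · rw [Multiset.count_cons_of_ne hjl]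
    exact hs.2 j hj

theorem OddDistinct.notMem_erase {s : Multiset ℕ} {l : ℕ} (hs : OddDistinct s) (hl : Odd l) :
    l ∉ s.erase l := by
  rw [← Multiset.count_eq_zero, Multiset.count_erase_self]
  exact Nat.sub_eq_zero_of_le (hs.2 l hl)

theorem OddDistinct.exists_sup_eq {s : Multiset ℕ} {l : ℕ} (hs : OddDistinct s)
    (hle : ∀ x ∈ s, x ≤ l) (hodd : Odd l → l ∉ s) :
    ∃ t, OddDistinct t ∧ t.sup = l ∧ t.erase l = s := by
  rcases eq_or_ne l 0 with rfl | hl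
  · exact ⟨s, hs, Nat.le_zero.1 (Multiset.sup_le.2 hle), Multiset.erase_of_notMem hs.1⟩
  · refine ⟨l ::ₘ s, hs.cons hl hodd, ?_, Multiset.erase_cons_head l s⟩
    rw [Multiset.sup_cons]
    exact sup_eq_left.2 (Multiset.sup_le.2 hle)

/-- The multiset obtained from `s` by adding `2` to every part and then adjoining `a` parts `2`
and `e` parts `1`: in the 2-modular diagram of `s`, this prepends a column. -/
def stack (s : Multiset ℕ) (a e : ℕ) : Multiset ℕ :=
  s.map (· + 2) + (Multiset.replicate a 2 + Multiset.replicate e 1)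

section Stack

variable {s t : Multiset ℕ} {a b e f : ℕ}

theorem mem_stack {x : ℕ} :
    x ∈ stack s a e ↔ (∃ y ∈ s, y + 2 = x) ∨ (a ≠ 0 ∧ x = 2) ∨ (e ≠ 0 ∧ x = 1) := by
  simp [stack, Multiset.mem_replicate]

theorem card_stack : Multiset.card (stack s a e) = Multiset.card s + a + e := by
  simp [stack, add_assoc]

theorem sum_stack : (stack s a e).sum = s.sum + 2 * Multiset.card s + 2 * a + e := by
  simp [stack, Multiset.sum_map_add, mul_comm, add_assoc]

theorem count_add_two_stack (j : ℕ) :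
    (stack s a e).count (j + 2) = s.count j + if j = 0 then a else 0 := by
  have hmap : (s.map (· + 2)).count (j + 2) = s.count j :=
    Multiset.count_map_eq_count' _ s (add_left_injective 2) j
  rw [stack, Multiset.count_add, Multiset.count_add, hmap, Multiset.count_replicate,
    Multiset.count_replicate, if_neg (by omega : ¬1 = j + 2), add_zero]
  congr 2
  simp

theorem count_one_stack : (stack s a e).count 1 = e := by
  simp [stack, Multiset.count_replicate]

theorem OddDistinct.stack (hs : OddDistinct s) (he : e ≤ 1) : OddDistinct (stack s a e) := by
  refine ⟨by simp [mem_stack], fun j hj => ?_⟩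
  rcases j with _ | _ | j
  · simp at hj
  · rwa [zero_add, count_one_stack]
  · have hj' : Odd j := by simpa [Nat.odd_add] using hj
    rw [count_add_two_stack, if_neg (by rintro rfl; simp at hj')]
    exact hs.2 j hj'

theorem OddDistinct.exists_eq_stack (hs : OddDistinct s) :
    ∃ t a e, OddDistinct t ∧ e ≤ 1 ∧ M2Rank.stack t a e = s := by
  set t := (s.filter (2 < ·)).map (· - 2) with ht
  have hcount (j : ℕ) (hj : j ≠ 0) : t.count j = s.count (j + 2) := by
    rw [ht, Multiset.count_map, ← Multiset.countP_eq_card_filter, Multiset.countP_filter,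
      Multiset.count]
    exact Multiset.countP_congr rfl fun x _ => by simp only [eq_iff_iff]; omega
  have ht0 : 0 ∉ t := by
    simp only [ht, Multiset.mem_map, Multiset.mem_filter]
    rintro ⟨x, ⟨-, hx⟩, hx0⟩
    omega
  have htodd : OddDistinct t := by
    refine ⟨ht0, fun j hj => ?_⟩
    rw [hcount j (by rintro rfl; simp at hj)]
    exact hs.2 _ (by simpa [Nat.odd_add] using hj)
  refine ⟨t, s.count 2, s.count 1, htodd, hs.2 1 odd_one, Multiset.ext.2 fun j => ?_⟩
  rcases j with _ | _ | _ | j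
  · rw [Multiset.count_eq_zero.2 hs.1]
    simp [mem_stack]
  · exact count_one_stack
  · rw [count_add_two_stack, Multiset.count_eq_zero.2 ht0, if_pos rfl, zero_add]
  · rw [count_add_two_stack, hcount _ (by omega), if_neg (by omega), add_zero]

theorem stack_injective (hs : 0 ∉ s) (ht : 0 ∉ t) (h : stack s a e = stack t b f) :
    s = t ∧ a = b ∧ e = f := by
  have hcount (j : ℕ) := congrArg (Multiset.count (j + 2)) h
  simp only [count_add_two_stack] at hcount
  refine ⟨Multiset.ext.2 fun j => ?_, ?_, ?_⟩
  · rcases eq_or_ne j 0 with rfl | hj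
    · rw [Multiset.count_eq_zero.2 hs, Multiset.count_eq_zero.2 ht]
    · simpa [hj] using hcount j
  · simpa [Multiset.count_eq_zero.2 hs, Multiset.count_eq_zero.2 ht] using hcount 0
  · simpa [count_one_stack] using congrArg (Multiset.count 1) h

end Stack

/-- The partitions of `n` without repeated odd parts, as multisets of parts. The argument `n` ranges
over `ℤ`, and there are no partitions of negative integers. -/
noncomputable def partitions (n : ℤ) : Finset (Multiset ℕ) :=
  {s ∈ Finset.univ.image fun P : n.toNat.Partition => P.parts | OddDistinct s ∧ (s.sum : ℤ) = n}

theorem mem_partitions {n : ℤ} {s : Multiset ℕ} :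
    s ∈ partitions n ↔ OddDistinct s ∧ (s.sum : ℤ) = n := by
  simp only [partitions, Finset.mem_filter, Finset.mem_image, Finset.mem_univ, true_and,
    and_iff_right_iff_imp]
  rintro ⟨hs, hn⟩
  exact ⟨⟨s, fun {i} hi => Nat.pos_of_ne_zero (ne_of_mem_of_not_mem hi hs.1), by omega⟩, rfl⟩

theorem partitions_of_neg {n : ℤ} (hn : n < 0) : partitions n = ∅ := by
  ext s
  simp only [mem_partitions, Finset.notMem_empty, iff_false]
  omega

theorem zero_mem_partitions {n : ℤ} : 0 ∈ partitions n ↔ n = 0 := by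
  simp [mem_partitions, OddDistinct, eq_comm]

theorem partitions_zero : partitions 0 = {0} := by
  ext s
  rw [mem_partitions, Finset.mem_singleton]
  constructor
  · rintro ⟨hs, hsum⟩
    exact eq_zero_of_sup_eq_zero hs.1
      (Nat.le_zero.1 (Multiset.sup_le.2 fun x hx => by have := Multiset.le_sum_of_mem hx; omega))
  · rintro rfl
    exact mem_partitions.1 (zero_mem_partitions.2 rfl)

theorem rank_mem_Icc {n : ℤ} {s : Multiset ℕ} (hs : s ∈ partitions n) :
    rank s ∈ Finset.Icc (-n) n := by
  obtain ⟨hodd, rfl⟩ := mem_partitions.1 hs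
  exact Finset.mem_Icc.2 ⟨neg_sum_le_rank hodd.1, rank_le_sum s⟩

/-- The map that removes the largest part `l` and prepends a column to the 2-modular diagram of what
remains. The lengths of the column are chosen so that, for a partition of `n - 1` of M2-rank
`m - 1 + a`, the result is a partition of `n - 2 * m` with exactly `a` parts `2`, and a part `1` if
and only if `l` is even. -/
def unstack (m : ℤ) (s : Multiset ℕ) : Multiset ℕ :=
  stack (s.erase s.sup) (((s.sup + 1) / 2 : ℕ) - (Multiset.card (s.erase s.sup) : ℤ) - m).toNat
    ((s.sup + 1) % 2)

theorem card_erase_sup_add_le {m : ℤ} {s : Multiset ℕ} (hr : m - 1 ≤ rank s)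
    (hm : ¬(s = 0 ∧ m = 1)) :
    (Multiset.card (s.erase s.sup) : ℤ) + m ≤ ((s.sup + 1) / 2 : ℕ) := by
  rcases eq_or_ne s 0 with rfl | hs
  · rw [rank_zero] at hr
    have : m ≠ 1 := fun h => hm ⟨rfl, h⟩
    simp only [Multiset.erase_zero, Multiset.card_zero, Multiset.sup_zero, bot_eq_zero]
    omega
  · have := Multiset.card_erase_add_one (sup_mem hs)
    rw [rank] at hr
    omega

theorem mapsTo_unstack (m n : ℤ) :
    Set.MapsTo (unstack m) {s ∈ partitions (n - 1) | m - 1 ≤ rank s ∧ ¬(s = 0 ∧ m = 1)}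
      {s ∈ partitions (n - 2 * m) | rank s ≤ m ∧ ¬(s = 0 ∧ m = 0)} := by
  rintro s ⟨hs, hr, hm⟩
  obtain ⟨hodd, hsum⟩ := mem_partitions.1 hs
  have hcard := card_erase_sup_add_le hr hm
  have herase := sup_add_sum_erase_sup s
  have hle (x : ℕ) (hx : x ∈ s.erase s.sup) : x ≤ s.sup :=
    Multiset.le_sup (Multiset.mem_of_mem_erase hx)
  have hne (x : ℕ) (hx : x ∈ s.erase s.sup) (hsup : Odd s.sup) : x ≠ s.sup :=
    ne_of_mem_of_not_mem hx (hodd.notMem_erase hsup)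
  simp only [Nat.odd_iff] at hne
  refine ⟨mem_partitions.2 ⟨(hodd.mono (Multiset.erase_le _ _)).stack (by omega), ?_⟩, ?_, ?_⟩
  · rw [unstack, sum_stack]
    omega
  · rw [unstack, rank_le_iff, card_stack]
    refine ⟨by omega, fun x hx => ?_⟩
    rcases mem_stack.1 hx with ⟨y, hy, rfl⟩ | ⟨-, rfl⟩ | ⟨-, rfl⟩
    · have := hle y hy
      have := hne y hy
      omega
    · omega
    · omega
  · rintro ⟨h0, rfl⟩
    have := congrArg Multiset.card h0
    rw [unstack, card_stack, Multiset.card_zero] at this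
    omega

theorem injOn_unstack (m n : ℤ) :
    Set.InjOn (unstack m) {s ∈ partitions n | m - 1 ≤ rank s ∧ ¬(s = 0 ∧ m = 1)} := by
  rintro s ⟨hs, hrs, hms⟩ t ⟨ht, hrt, hmt⟩ h
  replace hs := (mem_partitions.1 hs).1
  replace ht := (mem_partitions.1 ht).1
  have hcs := card_erase_sup_add_le hrs hms
  have hct := card_erase_sup_add_le hrt hmt
  obtain ⟨herase, ha, he⟩ := stack_injective (hs.mono (Multiset.erase_le _ _)).1
    (ht.mono (Multiset.erase_le _ _)).1 h
  have hsup : s.sup = t.sup := by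
    rw [herase] at ha hcs
    omega
  rcases eq_or_ne s 0 with rfl | hs0
  · exact (eq_zero_of_sup_eq_zero ht.1 hsup.symm).symm
  · have ht0 : t ≠ 0 := by
      rintro rfl
      exact hs0 (eq_zero_of_sup_eq_zero hs.1 hsup)
    rw [← Multiset.cons_erase (sup_mem hs0), ← Multiset.cons_erase (sup_mem ht0), herase, hsup]

theorem surjOn_unstack (m n : ℤ) :
    Set.SurjOn (unstack m) {s ∈ partitions (n - 1) | m - 1 ≤ rank s ∧ ¬(s = 0 ∧ m = 1)}
      {s ∈ partitions (n - 2 * m) | rank s ≤ m ∧ ¬(s = 0 ∧ m = 0)} := by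
  rintro t ⟨ht, hr, hm⟩
  obtain ⟨ht, hsum⟩ := mem_partitions.1 ht
  obtain ⟨s, a, e, hs, he, rfl⟩ := ht.exists_eq_stack
  obtain ⟨hr0, hr⟩ := rank_le_iff.1 hr
  rw [card_stack] at hr0 hr
  rw [sum_stack] at hsum
  have hpos : 0 ≤ 2 * (Multiset.card s + a + m) - 1 + (e : ℤ) := by
    rcases Multiset.empty_or_exists_mem (stack s a e) with h0 | ⟨x, hx⟩
    · have hcard := congrArg Multiset.card h0
      have : m ≠ 0 := fun h => hm ⟨h0, h⟩
      rw [card_stack, Multiset.card_zero] at hcard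
      omega
    · have := hr x hx
      have : x ≠ 0 := ne_of_mem_of_not_mem hx ht.1
      omega
  obtain ⟨l, hl⟩ := Int.eq_ofNat_of_zero_le hpos
  have hsl (x : ℕ) (hx : x ∈ s) : x ≤ l ∧ (l % 2 = 1 → x ≠ l) := by
    have := hr (x + 2) (mem_stack.2 (Or.inl ⟨x, hx, rfl⟩))
    omega
  obtain ⟨q, hq, rfl, rfl⟩ := hs.exists_sup_eq (fun x hx => (hsl x hx).1)
    fun hodd hmem => (hsl l hmem).2 (Nat.odd_iff.1 hodd) rfl
  have herase := sup_add_sum_erase_sup q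
  have hcard : Multiset.card q ≤ Multiset.card (q.erase q.sup) + 1 := by
    rw [← Multiset.card_cons]
    exact Multiset.card_le_card (Multiset.le_cons_erase q q.sup)
  refine ⟨q, ⟨mem_partitions.2 ⟨hq, by omega⟩, ?_, ?_⟩, ?_⟩
  · rw [rank]
    omega
  · rintro ⟨rfl, rfl⟩
    simp only [Multiset.sup_zero, bot_eq_zero] at hl
    omega
  · rw [unstack]
    congr 1 <;> omega

theorem card_rank_le_eq_card_le_rank (m n : ℤ) :
    ((partitions (n - 2 * m)).filter fun s => rank s ≤ m ∧ ¬(s = 0 ∧ m = 0)).card =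
      ((partitions (n - 1)).filter fun s => m - 1 ≤ rank s ∧ ¬(s = 0 ∧ m = 1)).card := by
  refine (Finset.card_nbij (unstack m) ?_ ?_ ?_).symm
  all_goals simp only [Finset.coe_filter]
  · exact mapsTo_unstack m n
  · exact injOn_unstack m (n - 1)
  · exact surjOn_unstack m n

/-! ### Rank sums and the symmetry of the rank -/

/-- The sum of `f (rank s)` over the partitions `s` of `n` without repeated odd parts. -/
noncomputable def rankSum (f : ℤ → ℤ) (n : ℤ) : ℤ :=
  ∑ s ∈ partitions n, f (rank s)

/-- The number of partitions of `n` without repeated odd parts. -/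
noncomputable def count (n : ℤ) : ℤ :=
  rankSum 1 n

/-- The number of partitions of `n` without repeated odd parts and with M2-rank at most `m`. -/
noncomputable def countLE (m n : ℤ) : ℤ :=
  rankSum (fun r => if r ≤ m then 1 else 0) n

/-- The number of partitions of `n` without repeated odd parts and with M2-rank greater than `m`. -/
noncomputable def countGT (m n : ℤ) : ℤ :=
  rankSum (fun r => if m < r then 1 else 0) n

section RankSum

variable (f g : ℤ → ℤ) (m : ℤ) {n : ℤ}

theorem rankSum_of_neg (hn : n < 0) : rankSum f n = 0 := by
  rw [rankSum, partitions_of_neg hn, Finset.sum_empty]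

theorem count_of_neg (hn : n < 0) : count n = 0 := rankSum_of_neg _ hn

theorem countLE_of_neg (hn : n < 0) : countLE m n = 0 := rankSum_of_neg _ hn

theorem countGT_of_neg (hn : n < 0) : countGT m n = 0 := rankSum_of_neg _ hn

variable (n)

theorem rankSum_add : rankSum (f + g) n = rankSum f n + rankSum g n :=
  Finset.sum_add_distrib

theorem rankSum_sub : rankSum (f - g) n = rankSum f n - rankSum g n :=
  Finset.sum_sub_distrib _ _

theorem rankSum_neg : rankSum (-f) n = -rankSum f n :=
  Finset.sum_neg_distrib _

theorem countLE_add_countGT : countLE m n + countGT m n = count n := by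
  rw [countLE, countGT, count, ← rankSum_add]
  congr 1
  ext r
  by_cases h : r ≤ m <;> simp [h, not_lt.2, not_le.1]

theorem count_zero : count 0 = 1 := by simp [count, rankSum, partitions_zero]

theorem count_eq_card : count n = (partitions n).card := by simp [count, rankSum]

theorem count_sub_one_le : count (n - 1) ≤ count n := by
  rw [count_eq_card, count_eq_card, Nat.cast_le]
  refine Finset.card_le_card_of_injOn (fun s => if 1 ∈ s then 2 ::ₘ s.erase 1 else 1 ::ₘ s) ?_ ?_
  · intro s hs
    obtain ⟨hodd, hsum⟩ := mem_partitions.1 hs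
    rw [Finset.mem_coe, mem_partitions]
    dsimp only
    split_ifs with h1
    · refine ⟨(hodd.mono (Multiset.erase_le _ _)).cons two_ne_zero (absurd · (by decide)), ?_⟩
      have := Multiset.sum_erase h1
      rw [Multiset.sum_cons]
      omega
    · refine ⟨hodd.cons one_ne_zero fun _ => h1, ?_⟩
      rw [Multiset.sum_cons]
      omega
  · refine Set.LeftInvOn.injOn (f₁' := fun t => if 1 ∈ t then t.erase 1 else 1 ::ₘ t.erase 2) ?_
    intro s hs
    have hodd := (mem_partitions.1 hs).1
    by_cases h1 : 1 ∈ s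
    · simp [h1, hodd.notMem_erase odd_one, Multiset.cons_erase]
    · simp [h1]

end RankSum

/-- The contribution of the empty partition to the generating function of `countLE`. -/
def defect (m n : ℤ) : ℤ :=
  (if m = 0 ∧ n = 0 then 1 else 0) - if m = 1 ∧ n = 1 then 1 else 0

theorem sum_partitions_ite_eq_card_add (p : Multiset ℕ → Prop) (q : Prop)
    [DecidablePred p] [Decidable q] (n : ℤ) (hq : q → p 0) :
    (∑ s ∈ partitions n, if p s then (1 : ℤ) else 0) =
      ((partitions n).filter fun s => p s ∧ ¬(s = 0 ∧ q)).card + if q ∧ n = 0 then 1 else 0 := by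
  have hzero : (if q ∧ n = 0 then (1 : ℤ) else 0) =
      ∑ s ∈ partitions n, if s = 0 then (if q then 1 else 0) else 0 := by
    rw [Finset.sum_ite_eq']
    simp only [zero_mem_partitions, and_comm (a := q), ite_and]
  rw [hzero, Finset.card_filter, Nat.cast_sum, ← Finset.sum_add_distrib]
  refine Finset.sum_congr rfl fun s _ => ?_
  by_cases hs : s = 0
  · subst hs
    by_cases h : q <;> simp [h, hq]
  · simp [hs]

theorem countLE_sub_two_mul (m n : ℤ) :
    countLE m (n - 2 * m) = countGT (m - 2) (n - 1) + defect m n := by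
  have hle := sum_partitions_ite_eq_card_add (fun s => rank s ≤ m) (m = 0) (n - 2 * m)
    fun hm => by rw [rank_zero, hm]
  have hgt := sum_partitions_ite_eq_card_add (fun s => m - 1 ≤ rank s) (m = 1) (n - 1)
    fun hm => by rw [rank_zero, hm, sub_self]
  have hcard := card_rank_le_eq_card_le_rank m n
  have hlt (r : ℤ) : m - 2 < r ↔ m - 1 ≤ r := by omega
  have hdefect : (m = 0 ∧ n - 2 * m = 0 ↔ m = 0 ∧ n = 0) ∧ (m = 1 ∧ n - 1 = 0 ↔ m = 1 ∧ n = 1) := by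
    omega
  simp only [hdefect] at hle hgt
  simp only [countLE, countGT, rankSum, defect, hlt]
  linarith

theorem countGT_eq_countLE_of_nonneg {u : ℤ} (hu : 0 ≤ u) (n : ℤ) :
    countGT u n = countLE (-1 - u) n := by
  induction hN : n.toNat using Nat.strong_induction_on generalizing n u with
  | _ N ih =>
    rcases lt_or_ge n 0 with hn | hn
    · rw [countGT_of_neg _ hn, countLE_of_neg _ hn]
    · have hgt := countLE_sub_two_mul (u + 2) (n + 1)
      have hle := countLE_sub_two_mul (-1 - u) (n - 2 - 2 * u)
      rw [defect, if_neg (by omega), if_neg (by omega)] at hgt hle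
      have hih : countGT (u + 2) (n - 2 * u - 3) = countLE (-1 - u - 2) (n - 2 * u - 3) := by
        rcases lt_or_ge (n - 2 * u - 3) 0 with hneg | hpos
        · rw [countGT_of_neg _ hneg, countLE_of_neg _ hneg]
        · rw [ih _ (by omega) (by omega) _ rfl]
          ring_nf
      have hsum := countLE_add_countGT (u + 2) (n - 2 * u - 3)
      have hsum' := countLE_add_countGT (-1 - u - 2) (n - 2 * u - 3)
      ring_nf at *
      linarith

theorem countGT_eq_countLE (u n : ℤ) : countGT u n = countLE (-1 - u) n := by
  rcases le_or_gt 0 u with hu | hu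
  · exact countGT_eq_countLE_of_nonneg hu n
  · have h := countGT_eq_countLE_of_nonneg (show 0 ≤ -1 - u by omega) n
    rw [sub_sub_cancel] at h
    linarith [countLE_add_countGT u n, countLE_add_countGT (-1 - u) n]

theorem rankSum_eq_sum (f : ℤ → ℤ) (n : ℤ) :
    rankSum f n = ∑ k ∈ Finset.Icc (-n) n, f k * (countLE k n - countLE (k - 1) n) := by
  simp only [countLE, rankSum, ← Finset.sum_sub_distrib, Finset.mul_sum]
  rw [Finset.sum_comm]
  refine Finset.sum_congr rfl fun s hs => ?_
  rw [← (Finset.sum_ite_eq (Finset.Icc (-n) n) (rank s) f).trans (if_pos (rank_mem_Icc hs))]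
  refine Finset.sum_congr rfl fun k _ => ?_
  split_ifs <;> grind

theorem rankSum_comp_neg (f : ℤ → ℤ) (n : ℤ) : rankSum (fun r => f (-r)) n = rankSum f n := by
  rw [rankSum_eq_sum, rankSum_eq_sum]
  refine Finset.sum_equiv (Equiv.neg ℤ) (fun k => ?_) fun k _ => ?_
  · simp only [Equiv.neg_apply, Finset.mem_Icc]
    omega
  · have hk := countGT_eq_countLE k n
    have hk' := countGT_eq_countLE (k - 1) n
    rw [show -1 - k = -k - 1 by ring] at hk
    rw [show -1 - (k - 1) = -k by ring] at hk'
    have hflip : countLE k n - countLE (k - 1) n = countLE (-k) n - countLE (-k - 1) n := by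
      linarith [countLE_add_countGT k n, countLE_add_countGT (k - 1) n]
    rw [Equiv.neg_apply, hflip]

theorem N2_eq_rankSum (r : ℤ) (m n : ℕ) :
    (N2 r m n : ℤ) = rankSum (fun k => if k ≡ r [ZMOD m] then 1 else 0) n := by
  rw [N2, rankSum, Finset.sum_boole, Nat.card_eq_fintype_card, Fintype.card_subtype]
  congr 1
  refine Finset.card_nbij (·.parts) ?_ (fun P _ Q _ h => Nat.Partition.ext h) ?_
  · intro P hP
    simp only [Finset.coe_filter, Finset.mem_univ, true_and, Set.mem_ofPred_eq] at hP ⊢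
    exact ⟨mem_partitions.2 ⟨⟨fun h => (P.parts_pos h).ne rfl, hP.1⟩, by rw [P.parts_sum]⟩, hP.2⟩
  · intro s hs
    simp only [Finset.coe_filter, Finset.mem_univ, true_and, Set.mem_ofPred_eq] at hs ⊢
    obtain ⟨hodd, hsum⟩ := mem_partitions.1 hs.1
    exact ⟨⟨s, fun {i} hi => Nat.pos_of_ne_zero (ne_of_mem_of_not_mem hi hodd.1),
      Nat.cast_injective hsum⟩, ⟨hodd.2, hs.2⟩, rfl⟩

theorem N2_neg (r : ℤ) (m n : ℕ) : N2 (-r) m n = N2 r m n := by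
  rw [← Nat.cast_inj (R := ℤ), N2_eq_rankSum, N2_eq_rankSum, ← rankSum_comp_neg]
  simp only [Int.neg_modEq_neg]

/-! ### The theta series of Gauss -/

theorem hasFiniteSupport_sub_exponent {e : ℤ → ℤ} {F : ℤ → ℤ → ℤ} (he : ∀ k, |k| ≤ e k + 1)
    (hF : ∀ k n, n < 0 → F k n = 0) (n : ℤ) :
    Function.HasFiniteSupport fun k => F k (n - e k) := by
  refine (Finset.Icc (-(n + 1)) (n + 1)).finite_toSet.subset fun k hk => ?_
  rw [Finset.mem_coe, Finset.mem_Icc, ← abs_le]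
  by_contra hlt
  exact hk (hF k _ (by linarith [he k]))

theorem mul_sub_one_nonneg (k : ℤ) : 0 ≤ k * (k - 1) := by
  rcases le_or_gt k 0 with hk | hk <;> nlinarith

theorem abs_le_two_mul_mul_sub_one (k : ℤ) : |k| ≤ 2 * k * (k - 1) + 1 :=
  abs_le'.2 ⟨by nlinarith [mul_sub_one_nonneg k, sq_nonneg (k - 1)],
    by nlinarith [mul_sub_one_nonneg k, sq_nonneg k]⟩

theorem abs_le_mul_two_mul_sub_one (k : ℤ) : |k| ≤ k * (2 * k - 1) + 1 :=
  abs_le'.2 ⟨by nlinarith [sq_nonneg (k - 1)], by nlinarith [sq_nonneg k]⟩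

theorem finsum_comp_add_one (F : ℤ → ℤ) : ∑ᶠ k, F (k + 1) = ∑ᶠ k, F k :=
  finsum_comp_equiv (Equiv.addRight 1)

theorem finsum_comp_one_sub (F : ℤ → ℤ) : ∑ᶠ k, F (1 - k) = ∑ᶠ k, F k :=
  finsum_comp_equiv (Equiv.subLeft 1)

-- Gauss: the generating function of `count` is the inverse of `∑ (-1)^i q^(i(2i-1))`.
theorem finsum_negOnePow_mul_count_hexagonal (n : ℤ) :
    ∑ᶠ i : ℤ, (i.negOnePow : ℤ) * count (n - i * (2 * i - 1)) = if n = 0 then 1 else 0 := by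
  set H : ℤ → ℤ := fun i => i.negOnePow * countGT (-2 * i) (n - i * (2 * i - 1)) with hH
  have hfin : Function.HasFiniteSupport H :=
    hasFiniteSupport_sub_exponent (F := fun i x => i.negOnePow * countGT (-2 * i) x)
      abs_le_mul_two_mul_sub_one (fun i x hx => by rw [countGT_of_neg _ hx, mul_zero]) n
  have hfin' : Function.HasFiniteSupport fun i => H (i + 1) :=
    hfin.comp_of_injective (add_left_injective 1)
  have hterm (i : ℤ) : (i.negOnePow : ℤ) * count (n - i * (2 * i - 1)) =
      H i - H (i + 1) + if i = 0 then (if n = 0 then 1 else 0) else 0 := by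
    have hrec := countLE_sub_two_mul (-2 * i) (n - i * (2 * i - 1) - 4 * i)
    rw [show n - i * (2 * i - 1) - 4 * i - 2 * (-2 * i) = n - i * (2 * i - 1) by ring,
      show n - i * (2 * i - 1) - 4 * i - 1 = n - (i + 1) * (2 * (i + 1) - 1) by ring,
      show -2 * i - 2 = -2 * (i + 1) by ring] at hrec
    rw [← countLE_add_countGT (-2 * i), hrec, defect, if_neg (by omega : ¬(-2 * i = 1 ∧ _))]
    simp only [hH, Int.negOnePow_succ, Units.val_neg]
    rcases eq_or_ne i 0 with rfl | hi
    · simp only [Int.negOnePow_zero]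
      norm_num
      ring
    · simp only [hi, if_false, mul_eq_zero, false_and, or_false, neg_eq_zero, two_ne_zero]
      ring
  rw [finsum_congr hterm, finsum_add_distrib, finsum_sub_distrib hfin hfin', finsum_comp_add_one,
    sub_self, zero_add]
  · exact (finsum_eq_single _ 0 fun i hi => if_neg hi).trans (if_pos rfl)
  · exact hfin.fun_sub hfin'
  · exact (Set.finite_singleton (0 : ℤ)).subset fun i hi => by_contra fun h => hi (if_neg h)

/-- The coefficients of the product of `∑ (-1)^k x^(2k) q^(2k(k-1))` with the generating function
of `countLE`, in which `x` marks the rank bound and `q` the size. -/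
noncomputable def altCountLE (m n : ℤ) : ℤ :=
  ∑ᶠ k : ℤ, (k.negOnePow : ℤ) * countLE (m - 2 * k) (n - 2 * k * (k - 1))

theorem hasFiniteSupport_altCountLE (m n : ℤ) :
    Function.HasFiniteSupport fun k : ℤ =>
      (k.negOnePow : ℤ) * countLE (m - 2 * k) (n - 2 * k * (k - 1)) :=
  hasFiniteSupport_sub_exponent (F := fun k x => k.negOnePow * countLE (m - 2 * k) x)
    abs_le_two_mul_mul_sub_one (fun k x hx => by rw [countLE_of_neg _ hx, mul_zero]) n

theorem hasFiniteSupport_countGT (m n : ℤ) :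
    Function.HasFiniteSupport fun k : ℤ =>
      (k.negOnePow : ℤ) * countGT (m - 2 * k) (n - 2 * k * (k - 1)) :=
  hasFiniteSupport_sub_exponent (F := fun k x => k.negOnePow * countGT (m - 2 * k) x)
    abs_le_two_mul_mul_sub_one (fun k x hx => by rw [countGT_of_neg _ hx, mul_zero]) n

theorem altCountLE_of_neg (m : ℤ) {n : ℤ} (hn : n < 0) : altCountLE m n = 0 := by
  refine (finsum_congr fun k => ?_).trans finsum_zero
  rw [countLE_of_neg, mul_zero]
  linarith [mul_sub_one_nonneg k]

theorem finsum_negOnePow_mul_count (n : ℤ) :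
    ∑ᶠ k : ℤ, (k.negOnePow : ℤ) * count (n - 2 * k * (k - 1)) = 0 := by
  rw [← self_eq_neg, ← finsum_neg_distrib, ← finsum_comp_one_sub]
  refine finsum_congr fun k => ?_
  rw [Int.negOnePow_sub, Int.negOnePow_one, Units.val_mul, Units.val_neg, Units.val_one,
    show n - 2 * (1 - k) * (1 - k - 1) = n - 2 * k * (k - 1) by ring]
  ring

theorem altCountLE_eq_neg_finsum_countGT (m n : ℤ) :
    altCountLE m n =
      -∑ᶠ k : ℤ, (k.negOnePow : ℤ) * countGT (m - 2 * k) (n - 2 * k * (k - 1)) := by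
  rw [eq_neg_iff_add_eq_zero, altCountLE,
    ← finsum_add_distrib (hasFiniteSupport_altCountLE m n) (hasFiniteSupport_countGT m n)]
  simp only [← mul_add, countLE_add_countGT, finsum_negOnePow_mul_count]

theorem altCountLE_one_sub (m n : ℤ) : altCountLE (1 - m) n = altCountLE m n := by
  rw [altCountLE_eq_neg_finsum_countGT m, altCountLE, ← finsum_comp_one_sub, ← finsum_neg_distrib]
  refine finsum_congr fun k => ?_
  rw [countGT_eq_countLE, Int.negOnePow_sub, Int.negOnePow_one, Units.val_mul, Units.val_neg,
    Units.val_one, show n - 2 * (1 - k) * (1 - k - 1) = n - 2 * k * (k - 1) by ring]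
  ring_nf

theorem defect_sub_two_mul {m k : ℤ} (n : ℤ) (hk : k ≠ m / 2) : defect (m - 2 * k) n = 0 := by
  rw [defect, if_neg (by omega), if_neg (by omega), sub_zero]

theorem altCountLE_sub_two_mul (m n : ℤ) :
    altCountLE m (n - 2 * m) = altCountLE m (n - 1) +
      (m / 2).negOnePow * defect (m % 2) (n - 2 * (m / 2) * (m / 2 + 1)) := by
  set G : ℤ → ℤ := fun k => k.negOnePow * countGT (m - 2 * k) (n - 1 - 2 * k * (k - 1)) with hG
  set D : ℤ → ℤ := fun k => k.negOnePow * defect (m - 2 * k) (n - 2 * k * (k + 1)) with hD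
  have hterm (k : ℤ) : (k.negOnePow : ℤ) * countLE (m - 2 * k) (n - 2 * m - 2 * k * (k - 1)) =
      -G (k + 1) + D k := by
    have hrec := countLE_sub_two_mul (m - 2 * k) (n - 2 * k * (k + 1))
    rw [show n - 2 * k * (k + 1) - 2 * (m - 2 * k) = n - 2 * m - 2 * k * (k - 1) by ring] at hrec
    simp only [hrec, hG, hD, Int.negOnePow_succ, Units.val_neg]
    ring_nf
  have hfinG : Function.HasFiniteSupport fun k => -G (k + 1) :=
    ((hasFiniteSupport_countGT m (n - 1)).comp_of_injective (add_left_injective 1)).fun_neg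
  have hD0 (k : ℤ) (hk : k ≠ m / 2) : D k = 0 := by
    simp only [hD, defect_sub_two_mul _ hk, mul_zero]
  have hfinD : Function.HasFiniteSupport D :=
    (Set.finite_singleton (m / 2)).subset fun k hk => by_contra fun h => hk (hD0 k h)
  rw [altCountLE_eq_neg_finsum_countGT m (n - 1), altCountLE, finsum_congr hterm,
    finsum_add_distrib hfinG hfinD, finsum_neg_distrib, finsum_comp_add_one,
    finsum_eq_single D _ hD0]
  simp only [hG, hD, Int.emod_def]

/-- The coefficient of `q^n` in `1 / (1 - q^d)`. -/
def geomCoeff (d n : ℤ) : ℤ :=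
  if 0 ≤ n ∧ d ∣ n then 1 else 0

theorem geomCoeff_of_neg (d : ℤ) {n : ℤ} (hn : n < 0) : geomCoeff d n = 0 :=
  if_neg fun h => h.1.not_gt hn

theorem geomCoeff_eq_add {d : ℤ} (hd : 0 < d) (n : ℤ) :
    geomCoeff d n = geomCoeff d (n - d) + if n = 0 then 1 else 0 := by
  rcases lt_trichotomy n 0 with hn | rfl | hn
  · rw [geomCoeff_of_neg d hn, geomCoeff_of_neg d (by omega), if_neg hn.ne, add_zero]
  · rw [geomCoeff_of_neg d (by omega : 0 - d < 0)]
    simp [geomCoeff]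
  · have hle : d ∣ n → d ≤ n := Int.le_of_dvd hn
    simp only [geomCoeff, dvd_sub_self_right, sub_nonneg, hn.ne', if_false, add_zero]
    congr 1
    grind

theorem eq_mul_geomCoeff_sub {F : ℤ → ℤ} {d e : ℤ} (c : ℤ) (hd : 0 < d) (he : 0 ≤ e)
    (hneg : ∀ n < 0, F n = 0) (hF : ∀ n, F n = F (n - d) + if n = e then c else 0) (n : ℤ) :
    F n = c * geomCoeff d (n - e) := by
  set D : ℤ → ℤ := fun n => F n - c * geomCoeff d (n - e) with hD
  have hDneg (n : ℤ) (hn : n < 0) : D n = 0 := by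
    simp only [hD, hneg n hn, geomCoeff_of_neg d (by omega : n - e < 0), mul_zero, sub_zero]
  have hper : Function.Periodic D d := fun n => by
    simp only [hD, hF (n + d), geomCoeff_eq_add hd (n + d - e), sub_eq_zero]
    rw [show n + d - e - d = n - e by ring, add_sub_cancel_right]
    split_ifs <;> ring
  refine sub_eq_zero.1 ?_
  change D n = 0
  rw [← hper.sub_zsmul_eq (|n| + 1)]
  refine hDneg _ ?_
  rw [smul_eq_mul]
  nlinarith [le_abs_self n, abs_nonneg n]

/-- The least `n` for which `altCountLE (i + 1) n` does not vanish. -/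
def leadExp (i : ℕ) : ℤ :=
  2 * ((i + 1) / 2 : ℕ) * ((i + 1) / 2 + 1 : ℕ) - (i % 2 : ℕ)

theorem leadExp_two_mul (j : ℕ) : leadExp (2 * j) = 2 * j * (j + 1) := by
  rw [leadExp, show (2 * j + 1) / 2 = j by omega, show 2 * j % 2 = 0 by omega]
  push_cast
  ring

theorem leadExp_two_mul_add_one (j : ℕ) : leadExp (2 * j + 1) = 2 * (j + 1) * (j + 2) - 1 := by
  rw [leadExp, show (2 * j + 1 + 1) / 2 = j + 1 by omega, show (2 * j + 1) % 2 = 1 by omega]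
  push_cast
  ring

theorem monotone_leadExp : Monotone leadExp := by
  refine monotone_nat_of_le_succ fun i => ?_
  rcases i.even_or_odd' with ⟨j, rfl | rfl⟩
  · rw [leadExp_two_mul, leadExp_two_mul_add_one]
    nlinarith
  · rw [leadExp_two_mul_add_one, show 2 * j + 1 + 1 = 2 * (j + 1) by ring, leadExp_two_mul]
    push_cast
    linarith

theorem leadExp_nonneg (i : ℕ) : 0 ≤ leadExp i :=
  monotone_leadExp (Nat.zero_le i)

theorem altCountLE_eq_geomCoeff (i : ℕ) (n : ℤ) :
    altCountLE (i + 1) n = (-1) ^ (i / 2) * geomCoeff (2 * i + 1) (n - leadExp i) := by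
  refine eq_mul_geomCoeff_sub _ (by omega) (leadExp_nonneg i) (fun n => altCountLE_of_neg _)
    (fun n => ?_) n
  have hrec := altCountLE_sub_two_mul (i + 1) (n + 1)
  rw [show n + 1 - 2 * ((i : ℤ) + 1) = n - (2 * i + 1) by ring, add_sub_cancel_right] at hrec
  rw [hrec]
  rcases i.even_or_odd' with ⟨j, rfl | rfl⟩
  · rw [leadExp_two_mul, Nat.mul_div_cancel_left _ two_pos]
    push_cast
    rw [show (2 * (j : ℤ) + 1) / 2 = j by omega, show (2 * (j : ℤ) + 1) % 2 = 1 by omega,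
      Int.coe_negOnePow_natCast]
    have hiff : n + 1 - 2 * (j : ℤ) * (j + 1) = 1 ↔ n = 2 * j * (j + 1) := by
      constructor <;> intro h <;> linarith
    simp only [defect, one_ne_zero, false_and, if_false, true_and, hiff]
    split_ifs <;> ring
  · rw [leadExp_two_mul_add_one, show (2 * j + 1) / 2 = j by omega]
    push_cast
    rw [show (2 * (j : ℤ) + 1 + 1) / 2 = j + 1 by omega,
      show (2 * (j : ℤ) + 1 + 1) % 2 = 0 by omega, Int.negOnePow_succ, Units.val_neg,
      Int.coe_negOnePow_natCast]
    have hiff : n + 1 - 2 * ((j : ℤ) + 1) * (j + 1 + 1) = 0 ↔ n = 2 * (j + 1) * (j + 2) - 1 := by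
      constructor <;> intro h <;> linarith
    simp only [defect, zero_ne_one, false_and, if_false, true_and, hiff]
    split_ifs <;> ring

/-! ### Summation by parts against the rank bound -/

theorem sum_Ico_sub_add_one (a : ℤ → ℤ) {A B : ℤ} (h : A ≤ B) :
    ∑ m ∈ Finset.Ico A B, (a m - a (m + 1)) = a A - a B := by
  induction B, h using Int.leInduction with
  | base => simp
  | succ B h ih =>
    rw [← Finset.sum_Ico_add_eq_sum_Ico_add_one h, ih]
    ring

theorem sum_Ico_sub_mul_countLE (a : ℤ → ℤ) {A B n : ℤ} (hA : A ≤ -n) (hB : n ≤ B) :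
    ∑ m ∈ Finset.Ico A B, (a m - a (m + 1)) * countLE m n = rankSum a n - a B * count n := by
  have hterm (s : Multiset ℕ) (hs : s ∈ partitions n) :
      ∑ m ∈ Finset.Ico A B, (a m - a (m + 1)) * (if rank s ≤ m then 1 else 0) =
        a (rank s) - a B := by
    have hrank := Finset.mem_Icc.1 (rank_mem_Icc hs)
    rw [← sum_Ico_sub_add_one a (hrank.2.trans hB)]
    simp only [mul_ite, mul_one, mul_zero]
    rw [← Finset.sum_filter]
    congr 1
    ext m
    simp only [Finset.mem_filter, Finset.mem_Ico]
    omega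
  simp only [countLE, count, rankSum, Finset.mul_sum]
  rw [Finset.sum_comm, Finset.sum_congr rfl hterm, Finset.sum_sub_distrib]
  simp

theorem sum_Ico_sub_mul_altCountLE (χ : ℤ → ℤ) {L n : ℤ} (hL : n < L) :
    ∑ m ∈ Finset.Ico (1 - L) (L + 1), (χ m - χ (m + 1)) * altCountLE m n =
      ∑ᶠ k : ℤ, (k.negOnePow : ℤ) * rankSum (fun r => χ (r + 2 * k)) (n - 2 * k * (k - 1)) := by
  have hterm (k : ℤ) :
      ∑ m ∈ Finset.Ico (1 - L) (L + 1),
          (χ m - χ (m + 1)) * (k.negOnePow * countLE (m - 2 * k) (n - 2 * k * (k - 1))) =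
        k.negOnePow * rankSum (fun r => χ (r + 2 * k)) (n - 2 * k * (k - 1)) -
          χ (L + 1) * (k.negOnePow * count (n - 2 * k * (k - 1))) := by
    have habel := sum_Ico_sub_mul_countLE (fun r => χ (r + 2 * k)) (A := 1 - L - 2 * k)
      (B := L + 1 - 2 * k) (n := n - 2 * k * (k - 1)) (by nlinarith [sq_nonneg k])
      (by nlinarith [sq_nonneg (k - 1)])
    rw [sub_add_cancel] at habel
    rw [mul_left_comm (χ (L + 1)), ← mul_sub, ← habel, Finset.mul_sum,
      ← sub_add_cancel (1 - L) (2 * k), ← sub_add_cancel (L + 1) (2 * k), ← Finset.sum_Ico_add']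
    refine Finset.sum_congr (by simp) fun m _ => ?_
    rw [add_sub_cancel_right, add_right_comm]
    ring
  have hfin : Function.HasFiniteSupport fun k : ℤ =>
      (k.negOnePow : ℤ) * rankSum (fun r => χ (r + 2 * k)) (n - 2 * k * (k - 1)) :=
    hasFiniteSupport_sub_exponent (F := fun k x => k.negOnePow * rankSum (fun r => χ (r + 2 * k)) x)
      abs_le_two_mul_mul_sub_one (fun k x hx => by rw [rankSum_of_neg _ hx, mul_zero]) n
  have hfin' : Function.HasFiniteSupport fun k : ℤ =>
      χ (L + 1) * (k.negOnePow * count (n - 2 * k * (k - 1))) :=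
    hasFiniteSupport_sub_exponent (F := fun k x => χ (L + 1) * (k.negOnePow * count x))
      abs_le_two_mul_mul_sub_one (fun k x hx => by rw [count_of_neg hx, mul_zero, mul_zero]) n
  have hfin'' (m : ℤ) : Function.HasFiniteSupport fun k : ℤ =>
      (χ m - χ (m + 1)) * (k.negOnePow * countLE (m - 2 * k) (n - 2 * k * (k - 1))) :=
    (hasFiniteSupport_altCountLE m n).mul_right fun _ => χ m - χ (m + 1)
  simp only [altCountLE, mul_finsum]
  rw [← finsum_sum_comm _ _ fun m _ => hfin'' m, finsum_congr hterm, finsum_sub_distrib hfin hfin',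
    ← mul_finsum, finsum_negOnePow_mul_count, mul_zero, sub_zero]

theorem sum_Ico_one_sub_eq_sum_range (F : ℤ → ℤ) (L : ℕ) :
    ∑ m ∈ Finset.Ico (1 - L : ℤ) (L + 1), F m = ∑ i ∈ Finset.range L, (F (i + 1) + F (-i)) := by
  induction L with
  | zero => simp
  | succ L ih =>
    have hL : (1 - (L + 1 : ℕ) : ℤ) = -L := by push_cast; ring
    rw [Finset.sum_range_succ, ← ih, hL, ← Finset.insert_Ico_add_one_left_eq_Ico (by omega),
      Finset.sum_insert (by simp), Nat.cast_succ,
      ← Finset.sum_Ico_add_eq_sum_Ico_add_one (by omega), neg_add_eq_sub]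
    ring

/-- The coefficients with which the progressions `geomCoeff (2 * i + 1)` enter the product of the
generating function of `rankSum χ` with a theta series, for even `χ`. -/
def weight (χ : ℤ → ℤ) (i : ℕ) : ℤ :=
  (-1) ^ (i / 2) * (χ i + χ (i + 1) - χ (i - 1) - χ (i + 2))

/-- The coefficients of the product of `∑ (-1)^i q^(4i(2i-1))` with the generating function of
`rankSum χ`. -/
noncomputable def thetaRankSum (χ : ℤ → ℤ) (n : ℤ) : ℤ :=
  ∑ᶠ i : ℤ, (i.negOnePow : ℤ) * rankSum χ (n - 4 * (i * (2 * i - 1)))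

theorem abs_le_four_mul (i : ℤ) : |i| ≤ 4 * (i * (2 * i - 1)) + 1 := by
  nlinarith [abs_le_mul_two_mul_sub_one i, mul_sub_one_nonneg i, sq_nonneg i]

theorem hasFiniteSupport_thetaRankSum (χ : ℤ → ℤ) (n : ℤ) :
    Function.HasFiniteSupport fun i : ℤ =>
    (i.negOnePow : ℤ) * rankSum χ (n - 4 * (i * (2 * i - 1))) :=
  hasFiniteSupport_sub_exponent (F := fun i x => i.negOnePow * rankSum χ x) abs_le_four_mul
    (fun i x hx => by rw [rankSum_of_neg _ hx, mul_zero]) n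

section Antiperiodic

variable {χ : ℤ → ℤ} (heven : Function.Even χ) (hχ : Function.Antiperiodic χ 4)
include hχ

theorem rankSum_comp_add_four_mul (i n : ℤ) :
    rankSum (fun r => χ (r + 4 * i)) n = i.negOnePow * rankSum χ n := by
  simp only [rankSum, Finset.mul_sum, mul_comm 4 i]
  exact Finset.sum_congr rfl fun s _ => hχ.add_int_mul_eq i

include heven

theorem rankSum_comp_add_two (n : ℤ) : rankSum (fun r => χ (r + 2)) n = 0 := by
  rw [← self_eq_neg, ← rankSum_neg, ← rankSum_comp_neg]
  congr 1
  ext r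
  rw [Pi.neg_apply, show r + 2 = r - 2 + 4 by ring, hχ, neg_neg, ← heven (r - 2), neg_sub,
    neg_add_eq_sub]

theorem finsum_rankSum_eq_thetaRankSum (n : ℤ) :
    ∑ᶠ k : ℤ, (k.negOnePow : ℤ) * rankSum (fun r => χ (r + 2 * k)) (n - 2 * k * (k - 1)) =
      thetaRankSum χ n := by
  set F : ℤ → ℤ := fun k =>
    k.negOnePow * rankSum (fun r => χ (r + 2 * k)) (n - 2 * k * (k - 1)) with hF
  have hodd (k : ℤ) (hk : k ∉ Set.range fun i : ℤ => 2 * i) : F k = 0 := by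
    obtain ⟨i, rfl | rfl⟩ := k.even_or_odd'
    · exact (hk ⟨i, rfl⟩).elim
    · have hshift := rankSum_comp_add_four_mul (hχ.add_const 2) i
        (n - 2 * (2 * i + 1) * (2 * i + 1 - 1))
      have hmul (r : ℤ) : r + 2 * (2 * i + 1) = r + 4 * i + 2 := by ring
      simp only [hF, hmul, hshift, rankSum_comp_add_two heven hχ, mul_zero]
  have hdouble (i : ℤ) : F (2 * i) = i.negOnePow * rankSum χ (n - 4 * (i * (2 * i - 1))) := by
    have hmul (r : ℤ) : r + 2 * (2 * i) = r + 4 * i := by ring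
    simp only [hF, hmul, Int.negOnePow_two_mul, rankSum_comp_add_four_mul hχ]
    rw [Units.val_one, one_mul]
    ring_nf
  rw [thetaRankSum, ← finsum_congr hdouble,
    ← finsum_mem_range (f := F) (mul_right_injective₀ two_ne_zero), finsum_mem_def,
    Set.indicator_eq_self.2 (Function.support_subset_iff'.2 hodd)]

theorem thetaRankSum_eq_sum {L : ℕ} {n : ℤ} (hL : n < L) :
    thetaRankSum χ n =
      ∑ i ∈ Finset.range L, weight χ i * geomCoeff (2 * i + 1) (n - leadExp i) := by
  rw [← finsum_rankSum_eq_thetaRankSum heven hχ, ← sum_Ico_sub_mul_altCountLE χ hL,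
    sum_Ico_one_sub_eq_sum_range]
  refine Finset.sum_congr rfl fun i _ => ?_
  have hfold : altCountLE (-i) n = altCountLE (i + 1) n := by
    rw [← altCountLE_one_sub]
    ring_nf
  rw [hfold, altCountLE_eq_geomCoeff, weight, heven, show -(i : ℤ) + 1 = -(i - 1) by ring, heven,
    add_assoc, one_add_one_eq_two]
  ring

end Antiperiodic

/-! ### The product with the theta series -/

theorem sum_mul_shift {a X : ℤ → ℤ} (ha : ∀ j < 0, a j = 0) (hX : ∀ m < 0, X m = 0) {d e : ℤ}
    (hd : 1 ≤ d) (he : 0 ≤ e) (n : ℤ) :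
    ∑ j ∈ Finset.Icc 0 n, a j * X (n - d * (j + e)) =
      ∑ t ∈ Finset.Icc 0 n, a (t - e) * X (n - d * t) := by
  have hshift := Finset.sum_map (Finset.Icc 0 n) (addRightEmbedding e)
    fun t => a (t - e) * X (n - d * t)
  simp only [Finset.map_add_right_Icc, zero_add, addRightEmbedding_apply, add_sub_cancel_right]
    at hshift
  rw [← hshift, Finset.sum_subset (Finset.Icc_subset_Icc_left he),
    ← Finset.sum_subset (Finset.Icc_subset_Icc_right (le_add_of_nonneg_right he))]
  · intro t ht ht'
    rw [Finset.mem_Icc] at ht ht'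
    rw [hX _ (by nlinarith [not_and.1 ht' ht.1]), mul_zero]
  · intro t ht ht'
    rw [Finset.mem_Icc] at ht ht'
    rw [ha _ (by omega), zero_mul]

theorem mul_two_mul_sub_one_nonneg (i : ℤ) : 0 ≤ i * (2 * i - 1) := by
  nlinarith [mul_sub_one_nonneg i, sq_nonneg i]

theorem hasFiniteSupport_count_hexagonal (n : ℤ) :
    Function.HasFiniteSupport fun i : ℤ => (i.negOnePow : ℤ) * count (n - i * (2 * i - 1)) :=
  hasFiniteSupport_sub_exponent (F := fun i x => i.negOnePow * count x)
    abs_le_mul_two_mul_sub_one (fun i x hx => by rw [count_of_neg hx, mul_zero]) n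

theorem sum_count_mul_thetaRankSum (χ : ℤ → ℤ) {n : ℤ} (hn : 0 ≤ n) :
    ∑ j ∈ Finset.Icc 0 n, count j * thetaRankSum χ (n - 4 * j) = rankSum χ n := by
  have hshift (i : ℤ) :
      ∑ j ∈ Finset.Icc 0 n, count j * (i.negOnePow *
          rankSum χ (n - 4 * j - 4 * (i * (2 * i - 1)))) =
        ∑ t ∈ Finset.Icc 0 n, i.negOnePow * count (t - i * (2 * i - 1)) *
          rankSum χ (n - 4 * t) := by
    simp only [mul_assoc, ← Finset.mul_sum,
      ← sum_mul_shift (fun j hj => count_of_neg hj) (fun m hm => rankSum_of_neg χ hm)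
        (by norm_num : (1 : ℤ) ≤ 4) (mul_two_mul_sub_one_nonneg i) n]
    rw [Finset.mul_sum]
    refine Finset.sum_congr rfl fun j _ => ?_
    rw [mul_left_comm, mul_add, sub_sub]
  have hfin (j : ℤ) : Function.HasFiniteSupport fun i : ℤ =>
      count j * (i.negOnePow * rankSum χ (n - 4 * j - 4 * (i * (2 * i - 1)))) :=
    (hasFiniteSupport_thetaRankSum χ (n - 4 * j)).mul_right fun _ => count j
  have hfin' (t : ℤ) : Function.HasFiniteSupport fun i : ℤ =>
      i.negOnePow * count (t - i * (2 * i - 1)) * rankSum χ (n - 4 * t) :=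
    (hasFiniteSupport_count_hexagonal t).mul_left fun _ => rankSum χ (n - 4 * t)
  simp only [thetaRankSum, mul_finsum]
  rw [← finsum_sum_comm _ _ fun j _ => hfin j, finsum_congr hshift,
    finsum_sum_comm _ _ fun t _ => hfin' t]
  simp only [← finsum_mul, finsum_negOnePow_mul_count_hexagonal]
  rw [Finset.sum_eq_single_of_mem 0 (by simpa using hn)]
  · simp
  · intro t _ ht
    rw [if_neg ht, zero_mul]

/-- The coefficient of `q^n` in `1 / ((1 - q^4) (1 - q^d))`. -/
noncomputable def denumerant (d n : ℤ) : ℤ :=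
  ((Finset.Icc 0 (n / 4)).filter fun b => d ∣ n - 4 * b).card

theorem denumerant_of_neg (d : ℤ) {n : ℤ} (hn : n < 0) : denumerant d n = 0 := by
  rw [denumerant, Finset.Icc_eq_empty (by omega), Finset.filter_empty, Finset.card_empty,
    Nat.cast_zero]

theorem denumerant_nonneg (d n : ℤ) : 0 ≤ denumerant d n := Nat.cast_nonneg _

theorem denumerant_eq_sum_geomCoeff (d n : ℤ) :
    denumerant d n = ∑ b ∈ Finset.Icc 0 (n / 4), geomCoeff d (n - 4 * b) := by
  rw [denumerant, Finset.natCast_card_filter]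
  refine Finset.sum_congr rfl fun b hb => ?_
  rw [Finset.mem_Icc] at hb
  rw [geomCoeff]
  congr 1
  exact propext (iff_and_self.2 fun _ => by omega)

theorem denumerant_eq_add (d n : ℤ) :
    denumerant d n = denumerant d (n - 4) + geomCoeff d n := by
  rcases lt_or_ge n 0 with hn | hn
  · rw [denumerant_of_neg d hn, denumerant_of_neg d (by omega), geomCoeff_of_neg d hn, zero_add]
  · rw [denumerant_eq_sum_geomCoeff, denumerant_eq_sum_geomCoeff,
      ← Finset.insert_Icc_add_one_left_eq_Icc (by omega), Finset.sum_insert (by simp), add_comm]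
    congr 1
    · rw [show n / 4 = (n - 4) / 4 + 1 by omega, ← Finset.map_add_right_Icc, Finset.sum_map]
      refine Finset.sum_congr rfl fun b _ => ?_
      rw [addRightEmbedding_apply]
      ring_nf
    · rw [mul_zero, sub_zero]

/-- The coefficient of `q^n` in `q^(leadExp i) / ((1 - q^4) (1 - q^(2i+1)))`. -/
noncomputable def shiftedDenumerant (i : ℕ) (n : ℤ) : ℤ :=
  denumerant (2 * i + 1) (n - leadExp i)

theorem shiftedDenumerant_of_lt {i : ℕ} {n : ℤ} (hn : n < leadExp i) :
    shiftedDenumerant i n = 0 :=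
  denumerant_of_neg _ (by omega)

/-- The first `L` terms of the product of `1 / (1 - q^4)` with the expansion of `thetaRankSum χ`
in `thetaRankSum_eq_sum`. -/
noncomputable def minorant (χ : ℤ → ℤ) (L : ℕ) (n : ℤ) : ℤ :=
  ∑ i ∈ Finset.range L, weight χ i * shiftedDenumerant i n

theorem minorant_of_neg (χ : ℤ → ℤ) (L : ℕ) {n : ℤ} (hn : n < 0) : minorant χ L n = 0 :=
  Finset.sum_eq_zero fun i _ => by
    rw [shiftedDenumerant_of_lt (hn.trans_le (leadExp_nonneg i)), mul_zero]

theorem thetaRankSum_eq_minorant_sub {χ : ℤ → ℤ} (heven : Function.Even χ)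
    (hχ : Function.Antiperiodic χ 4) {L : ℕ} {n : ℤ} (hL : n < L) :
    thetaRankSum χ n = minorant χ L n - minorant χ L (n - 4) := by
  rw [thetaRankSum_eq_sum heven hχ hL, minorant, minorant, ← Finset.sum_sub_distrib]
  refine Finset.sum_congr rfl fun i _ => ?_
  rw [shiftedDenumerant, shiftedDenumerant, denumerant_eq_add, sub_right_comm]
  ring

theorem minorant_le_rankSum {χ : ℤ → ℤ} (heven : Function.Even χ)
    (hχ : Function.Antiperiodic χ 4) {L : ℕ} {n : ℤ} (hn : 0 ≤ n) (hL : n < L)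
    (hnonneg : ∀ m, m ≤ n → 0 ≤ minorant χ L m) :
    minorant χ L n ≤ rankSum χ n := by
  have htheta (j : ℤ) (hj : j ∈ Finset.Icc 0 n) : count j * thetaRankSum χ (n - 4 * j) =
      count j * minorant χ L (n - 4 * j) - count j * minorant χ L (n - 4 * (j + 1)) := by
    rw [thetaRankSum_eq_minorant_sub heven hχ (by linarith [(Finset.mem_Icc.1 hj).1]), mul_sub,
      sub_sub, mul_add_one]
  rw [← sum_count_mul_thetaRankSum χ hn, Finset.sum_congr rfl htheta, Finset.sum_sub_distrib,
    sum_mul_shift (fun j hj => count_of_neg hj) (fun m hm => minorant_of_neg χ L hm)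
      (by norm_num) zero_le_one, ← Finset.sum_sub_distrib]
  calc minorant χ L n
      = count 0 * minorant χ L (n - 4 * 0) - count (0 - 1) * minorant χ L (n - 4 * 0) := by
        rw [count_zero, count_of_neg (by norm_num)]
        ring_nf
    _ ≤ _ := by
        refine Finset.single_le_sum
          (f := fun t => count t * minorant χ L (n - 4 * t) -
            count (t - 1) * minorant χ L (n - 4 * t))
          (fun t ht => ?_) (Finset.mem_Icc.2 ⟨le_rfl, hn⟩)
        rw [← sub_mul]
        rw [Finset.mem_Icc] at ht
        exact mul_nonneg (sub_nonneg.2 (count_sub_one_le t)) (hnonneg _ (by omega))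

/-! ### Two-part denumerants -/

section Progression

variable {d : ℤ} (hd : 0 < d) (v N : ℤ)
include hd

theorem ediv_le_card_filter_modEq :
    N / d ≤ ((Finset.Ico 0 N).filter fun b => b ≡ v [ZMOD d]).card := by
  have hle : ((N / d : ℤ) : ℚ) ≤ N / d := by
    rw [le_div_iff₀ (Int.cast_pos.2 hd)]
    exact_mod_cast Int.ediv_mul_le N hd.ne'
  rw [Int.Ico_filter_modEq_card _ _ hd]
  refine le_max_of_le_left (le_sub_iff_add_le.2 ?_)
  rw [← Int.ceil_intCast_add]
  refine Int.ceil_mono ?_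
  rw [Int.cast_zero, sub_div, sub_div]
  linarith [zero_div (d : ℚ)]

theorem card_filter_modEq_le (hN : 0 ≤ N) :
    ((Finset.Ico 0 N).filter fun b => b ≡ v [ZMOD d]).card ≤ (N - 1) / d + 1 := by
  have hlt : N ≤ ((N - 1) / d + 1) * d := by
    linarith [Int.lt_ediv_add_one_mul_self (N - 1) hd]
  have hle : (N / d : ℚ) ≤ ((N - 1) / d + 1 : ℤ) := by
    rw [div_le_iff₀ (Int.cast_pos.2 hd)]
    exact_mod_cast hlt
  rw [Int.Ico_filter_modEq_card _ _ hd]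
  refine max_le (sub_le_iff_le_add.2 ?_) (by nlinarith)
  rw [← Int.ceil_intCast_add]
  refine Int.ceil_mono ?_
  rw [Int.cast_zero, sub_div, sub_div]
  linarith [zero_div (d : ℚ)]

end Progression

theorem exists_denumerant_eq_card {d : ℤ} (hodd : Odd d) (n : ℤ) : ∃ v : ℤ,
    denumerant d n = ((Finset.Ico 0 (n / 4 + 1)).filter fun b => b ≡ v [ZMOD d]).card := by
  have hcop : IsCoprime d (2 ^ 2) := (Int.isCoprime_two_right.2 hodd).pow_right
  have ⟨w, u, huw⟩ := hcop
  refine ⟨n * u, ?_⟩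
  have hiff (b : ℤ) : d ∣ n - 4 * b ↔ b ≡ n * u [ZMOD d] := by
    have hfour : n - 4 * b = 2 ^ 2 * (n * u - b) + n * w * d := by linear_combination (-n) * huw
    rw [hfour, dvd_add_left (dvd_mul_left _ _), Int.modEq_iff_dvd]
    exact ⟨hcop.dvd_of_dvd_mul_left, (·.mul_left _)⟩
  simp only [denumerant, hiff]
  rfl

section OddDenumerant

variable {d : ℤ} (hd : 0 < d) (hodd : Odd d)
include hd hodd

theorem ediv_le_denumerant (n : ℤ) : (n / 4 + 1) / d ≤ denumerant d n := by
  obtain ⟨v, hv⟩ := exists_denumerant_eq_card hodd n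
  exact hv ▸ ediv_le_card_filter_modEq hd v (n / 4 + 1)

theorem denumerant_le {n : ℤ} (hn : 0 ≤ n) : denumerant d n ≤ n / 4 / d + 1 := by
  obtain ⟨v, hv⟩ := exists_denumerant_eq_card hodd n
  simpa [hv] using card_filter_modEq_le hd v (n / 4 + 1) (by omega)

theorem denumerant_le_denumerant_add_one {d' n n' : ℤ} (hodd' : Odd d') (hdd' : d ≤ d')
    (hnn' : n' ≤ n) : denumerant d' n' ≤ denumerant d n + 1 := by
  rcases lt_or_ge n' 0 with hn' | hn'
  · rw [denumerant_of_neg d' hn']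
    linarith [denumerant_nonneg d n]
  · calc denumerant d' n'
        ≤ n' / 4 / d' + 1 := denumerant_le (hd.trans_le hdd') hodd' hn'
      _ ≤ n' / 4 / d + 1 := by
        gcongr ?_ + 1
        have hd' : 0 < d' := hd.trans_le hdd'
        have hnonneg : 0 ≤ n' / 4 / d' := Int.ediv_nonneg (by omega) hd'.le
        exact Int.le_ediv_of_mul_le hd ((mul_le_mul_of_nonneg_left hdd' hnonneg).trans
          (Int.ediv_mul_le (n' / 4) hd'.ne'))
      _ ≤ (n / 4 + 1) / d + 1 := by
        gcongr ?_ + 1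
        exact Int.ediv_le_ediv hd (by omega)
      _ ≤ denumerant d n + 1 := by
        gcongr
        exact ediv_le_denumerant hd hodd n

end OddDenumerant

/-! ### Weights of period 8 -/

theorem shiftedDenumerant_le_add_one {i j : ℕ} (hij : i ≤ j) (n : ℤ) :
    shiftedDenumerant j n ≤ shiftedDenumerant i n + 1 :=
  denumerant_le_denumerant_add_one (by omega) (odd_two_mul_add_one _) (odd_two_mul_add_one _)
    (by omega) (by linarith [monotone_leadExp hij])

theorem periodic_weight {χ : ℤ → ℤ} (hχ : Function.Periodic χ 8) :
    Function.Periodic (weight χ) 8 := by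
  intro i
  have hshift (m : ℤ) : χ (i + 8 + m) = χ (i + m) := by rw [add_right_comm, hχ]
  rw [weight, weight, show (i + 8) / 2 = i / 2 + 2 * 2 by omega, pow_add, pow_mul, neg_one_sq,
    one_pow, mul_one]
  push_cast
  rw [hχ, sub_eq_add_neg _ (1 : ℤ), sub_eq_add_neg _ (1 : ℤ), hshift, hshift, hshift]

theorem minorant_eq_minorant_of_lt (χ : ℤ → ℤ) {K L : ℕ} (hKL : K ≤ L) {n : ℤ}
    (hn : n < leadExp K) : minorant χ L n = minorant χ K n := by
  refine (Finset.sum_subset (Finset.range_mono hKL) fun i _ hi => ?_).symm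
  rw [Finset.mem_range, not_lt] at hi
  rw [shiftedDenumerant_of_lt (hn.trans_le (monotone_leadExp hi)), mul_zero]

theorem mul_le_leadExp (R : ℕ) : 83 * R ≤ leadExp (8 * R + 3) := by
  rw [show 8 * R + 3 = 2 * (4 * R + 1) + 1 by ring, leadExp_two_mul_add_one]
  push_cast
  rcases R.eq_zero_or_pos with rfl | hR
  · norm_num
  · nlinarith [(Nat.one_le_cast (α := ℤ)).2 hR]

theorem minorant_sub_mul_le {χ : ℤ → ℤ} {b : ℕ} {C n : ℤ}
    (hblock : ∀ r : ℕ, -C ≤ ∑ i ∈ Finset.range 8,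
      weight χ (b + 8 * r + i) * shiftedDenumerant (b + 8 * r + i) n) (R : ℕ) :
    minorant χ b n - C * R ≤ minorant χ (b + 8 * R) n := by
  induction R with
  | zero => simp
  | succ R ih =>
    rw [minorant, minorant, mul_add_one 8, ← add_assoc, Finset.sum_range_add]
    push_cast
    rw [minorant, minorant] at ih
    linarith [hblock R]

theorem minorant_sub_mul_le_of_le {χ : ℤ → ℤ} {b L : ℕ} (hb : 3 ≤ b) {C : ℤ} {n : ℕ}
    (hblock : ∀ r : ℕ, -C ≤ ∑ i ∈ Finset.range 8,
      weight χ (b + 8 * r + i) * shiftedDenumerant (b + 8 * r + i) n)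
    (hL : b + 8 * (n / 83 + 1) ≤ L) :
    minorant χ b n - C * (n / 83 + 1) ≤ minorant χ L n := by
  have hlead : (n : ℤ) < leadExp (b + 8 * (n / 83 + 1)) :=
    calc (n : ℤ) < 83 * (n / 83 + 1 : ℕ) := by push_cast; omega
      _ ≤ leadExp (8 * (n / 83 + 1) + 3) := mul_le_leadExp _
      _ ≤ leadExp (b + 8 * (n / 83 + 1)) := monotone_leadExp (by omega)
  rw [minorant_eq_minorant_of_lt χ hL hlead]
  exact_mod_cast minorant_sub_mul_le hblock (n / 83 + 1)

/-- The even function taking the value `1` at `±a` and `-1` at `4 ± a` modulo `8`, with the values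
added where these residues coincide. It is the one weighing the M2-rank in the difference of
`N2 a 8` and `N2 (4 - a) 8`. -/
def residueSign (a m : ℤ) : ℤ :=
  (if m ≡ a [ZMOD 8] then 1 else 0) + (if m ≡ -a [ZMOD 8] then 1 else 0) -
    (if m ≡ 4 - a [ZMOD 8] then 1 else 0) - if m ≡ -(4 - a) [ZMOD 8] then 1 else 0

theorem even_residueSign (a : ℤ) : Function.Even (residueSign a) := by
  intro m
  have hneg (c : ℤ) : -m ≡ c [ZMOD 8] ↔ m ≡ -c [ZMOD 8] := by
    rw [← Int.neg_modEq_neg, neg_neg]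
  simp only [residueSign, hneg, neg_neg]
  ring

theorem antiperiodic_residueSign (a : ℤ) : Function.Antiperiodic (residueSign a) 4 := by
  intro m
  have h₁ : m + 4 ≡ a [ZMOD 8] ↔ m ≡ -(4 - a) [ZMOD 8] := by simp only [Int.ModEq]; omega
  have h₂ : m + 4 ≡ -a [ZMOD 8] ↔ m ≡ 4 - a [ZMOD 8] := by simp only [Int.ModEq]; omega
  have h₃ : m + 4 ≡ 4 - a [ZMOD 8] ↔ m ≡ -a [ZMOD 8] := by simp only [Int.ModEq]; omega
  have h₄ : m + 4 ≡ -(4 - a) [ZMOD 8] ↔ m ≡ a [ZMOD 8] := by simp only [Int.ModEq]; omega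
  simp only [residueSign, h₁, h₂, h₃, h₄]
  ring

theorem rankSum_residueSign (a : ℤ) (n : ℕ) :
    rankSum (residueSign a) n = 2 * (N2 a 8 n - N2 (4 - a) 8 n) := by
  have hsum : rankSum (residueSign a) n = N2 a 8 n + N2 (-a) 8 n - N2 (4 - a) 8 n -
      N2 (-(4 - a)) 8 n := by
    simp only [N2_eq_rankSum, ← rankSum_add, ← rankSum_sub]
    rfl
  rw [hsum, N2_neg, N2_neg]
  ring

theorem weight_residueSign_add (a : ℤ) (b r i : ℕ) :
    weight (residueSign a) (b + 8 * r + i) = weight (residueSign a) (b + i) := by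
  have hperiodic := periodic_weight (antiperiodic_residueSign a).periodic_two_mul
  rw [add_right_comm, mul_comm 8 r]
  exact hperiodic.nat_mul r (b + i)

theorem neg_eight_le_block_residueSign_zero (n : ℤ) (r : ℕ) :
    -8 ≤ ∑ i ∈ Finset.range 8,
      weight (residueSign 0) (3 + 8 * r + i) * shiftedDenumerant (3 + 8 * r + i) n := by
  have hweight : [0, 1, 2, 3, 4, 5, 6, 7].map (fun i => weight (residueSign 0) (3 + i)) =
      [2, -2, 2, 2, -2, 2, -2, -2] := by decide
  simp only [List.map_cons, List.map_nil, List.cons.injEq] at hweight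
  have hpair {i j : ℕ} (hij : i ≤ j) := shiftedDenumerant_le_add_one
    (Nat.add_le_add_left hij (3 + 8 * r)) n
  simp only [weight_residueSign_add, Finset.sum_range_succ, Finset.sum_range_zero, hweight]
  linarith [hpair (show 0 ≤ 1 by norm_num), hpair (show 2 ≤ 4 by norm_num),
    hpair (show 3 ≤ 6 by norm_num), hpair (show 5 ≤ 7 by norm_num)]

theorem neg_four_le_block_residueSign_one (n : ℤ) (r : ℕ) :
    -4 ≤ ∑ i ∈ Finset.range 8,
      weight (residueSign 1) (7 + 8 * r + i) * shiftedDenumerant (7 + 8 * r + i) n := by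
  have hweight : [0, 1, 2, 3, 4, 5, 6, 7].map (fun i => weight (residueSign 1) (7 + i)) =
      [0, 0, 2, 2, 0, 0, -2, -2] := by decide
  simp only [List.map_cons, List.map_nil, List.cons.injEq] at hweight
  have hpair {i j : ℕ} (hij : i ≤ j) := shiftedDenumerant_le_add_one
    (Nat.add_le_add_left hij (7 + 8 * r)) n
  simp only [weight_residueSign_add, Finset.sum_range_succ, Finset.sum_range_zero, hweight]
  linarith [hpair (show 2 ≤ 6 by norm_num), hpair (show 3 ≤ 7 by norm_num)]

theorem minorant_residueSign_zero_three (n : ℤ) :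
    minorant (residueSign 0) 3 n =
      2 * denumerant 1 n - 2 * denumerant 3 (n - 3) - 2 * denumerant 5 (n - 4) := by
  have hweight : [0, 1, 2].map (weight (residueSign 0)) = [2, -2, -2] := by decide
  simp only [List.map_cons, List.map_nil, List.cons.injEq] at hweight
  simp only [minorant, shiftedDenumerant, leadExp, Finset.sum_range_succ, Finset.sum_range_zero,
    hweight]
  norm_num
  ring

theorem minorant_residueSign_one_seven (n : ℤ) :
    minorant (residueSign 1) 7 n =
      2 * denumerant 3 (n - 3) + 2 * denumerant 5 (n - 4) - 2 * denumerant 11 (n - 23) -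
        2 * denumerant 13 (n - 24) := by
  have hweight : [0, 1, 2, 3, 4, 5, 6].map (weight (residueSign 1)) =
      [0, 2, 2, 0, 0, -2, -2] := by decide
  simp only [List.map_cons, List.map_nil, List.cons.injEq] at hweight
  simp only [minorant, shiftedDenumerant, leadExp, Finset.sum_range_succ, Finset.sum_range_zero,
    hweight]
  norm_num
  ring

theorem minorant_residueSign_zero_of_mem_range : ∀ m ∈ Finset.range 83,
    0 ≤ minorant (residueSign 0) 11 m ∧ (36 ≤ m → 0 < minorant (residueSign 0) 11 m) := by
  decide +kernel

theorem minorant_residueSign_one_of_mem_range : ∀ m ∈ Finset.range 83,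
    0 ≤ minorant (residueSign 1) 11 m ∧ (36 ≤ m → 0 < minorant (residueSign 1) 11 m) := by
  decide +kernel

-- Each block of eight terms past the main ones costs at most `8`, and about `n / 83` blocks are
-- nonzero, while the main term is `n / 2 - n / 6 - n / 10` up to a constant.
theorem minorant_residueSign_zero_pos {L n : ℕ} (hn : 83 ≤ n) (hL : n + 15 ≤ L) :
    0 < minorant (residueSign 0) L n := by
  have hmain := minorant_sub_mul_le_of_le le_rfl (neg_eight_le_block_residueSign_zero n)
    (show 3 + 8 * (n / 83 + 1) ≤ L by omega)
  have h₁ := ediv_le_denumerant (d := 1) (by norm_num) (by decide) n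
  have h₃ := denumerant_le (d := 3) (n := n - 3) (by norm_num) (by decide) (by omega)
  have h₅ := denumerant_le (d := 5) (n := n - 4) (by norm_num) (by decide) (by omega)
  rw [minorant_residueSign_zero_three] at hmain
  omega

theorem minorant_residueSign_one_pos {L n : ℕ} (hn : 83 ≤ n) (hL : n + 15 ≤ L) :
    0 < minorant (residueSign 1) L n := by
  have hmain := minorant_sub_mul_le_of_le (by norm_num) (neg_four_le_block_residueSign_one n)
    (show 7 + 8 * (n / 83 + 1) ≤ L by omega)
  have h₃ := ediv_le_denumerant (d := 3) (by norm_num) (by decide) (n - 3)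
  have h₅ := ediv_le_denumerant (d := 5) (by norm_num) (by decide) (n - 4)
  have h₁₁ := denumerant_le (d := 11) (n := n - 23) (by norm_num) (by decide) (by omega)
  have h₁₃ := denumerant_le (d := 13) (n := n - 24) (by norm_num) (by decide) (by omega)
  rw [minorant_residueSign_one_seven] at hmain
  omega

theorem N2_four_sub_lt_of_minorant_pos {a : ℤ}
    (hsmall : ∀ m ∈ Finset.range 83, 0 ≤ minorant (residueSign a) 11 m ∧
      (36 ≤ m → 0 < minorant (residueSign a) 11 m))
    (hlarge : ∀ {L m : ℕ}, 83 ≤ m → m + 15 ≤ L → 0 < minorant (residueSign a) L m)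
    {n : ℕ} (hn : 36 ≤ n) : N2 (4 - a) 8 n < N2 a 8 n := by
  have hminorant {m : ℕ} (hm : m ≤ n) : 0 ≤ minorant (residueSign a) (n + 15) m ∧
      (36 ≤ m → 0 < minorant (residueSign a) (n + 15) m) := by
    rcases lt_or_ge m 83 with hm83 | hm83
    · have hlead : (m : ℤ) < leadExp 11 := Int.ofNat_lt.2 hm83
      rw [minorant_eq_minorant_of_lt _ (by omega) hlead]
      exact hsmall m (Finset.mem_range.2 hm83)
    · have hpos := hlarge hm83 (Nat.add_le_add_right hm 15)
      exact ⟨hpos.le, fun _ => hpos⟩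
  have hle : minorant (residueSign a) (n + 15 : ℕ) n ≤ rankSum (residueSign a) n := by
    refine minorant_le_rankSum (even_residueSign a) (antiperiodic_residueSign a) (by omega)
      (by omega) fun m hm => ?_
    rcases lt_or_ge m 0 with hm0 | hm0
    · exact (minorant_of_neg _ _ hm0).ge
    · lift m to ℕ using hm0
      exact (hminorant (by omega)).1
  have hpos := ((hminorant le_rfl).2 hn).trans_le hle
  rw [rankSum_residueSign] at hpos
  omega

end M2Rank

theorem N2_mod8_inequalities (n : ℕ) (hn : 36 ≤ n) :
    N2 4 8 n < N2 0 8 n ∧ N2 3 8 n < N2 1 8 n := by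
  constructor
  · exact M2Rank.N2_four_sub_lt_of_minorant_pos M2Rank.minorant_residueSign_zero_of_mem_range
      M2Rank.minorant_residueSign_zero_pos hn
  · exact M2Rank.N2_four_sub_lt_of_minorant_pos M2Rank.minorant_residueSign_one_of_mem_range
      M2Rank.minorant_residueSign_one_pos hn
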